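/- arXiv:1509.08278 — 2 statements merged into one kernel-verified Lean document; each statement's English description precedes it below -/
import Mathlib

section
/- Let G be a countable infinite discrete group such that for every standard probability space (X₀, μ₀) the Bernoulli shift G ↷ (X₀^G, μ₀^G) is 𝕋-cocycle superrigid (G ∈ 𝒢), and let k ≥ 2 be an integer. Consider the Bernoulli shift G ↷ ([k]^G, ν_k^G), where [k] is a k-element set and ν_k the uniform probability measure on it. If the natural map Ψ₁ : H¹(G, 𝕋) → H¹(G ↷ [k]^G; 𝕋) is surjective (i.e., H¹(G ↷ [k]^G; 𝕋) = H¹(G, 𝕋)), then H¹(G, ℤG/kℤG) = 0. -/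
open MeasureTheory

noncomputable section

namespace AlgActCohomology

/-- The Borel σ-algebra on the circle group `𝕋 = {z ∈ ℂ : |z| = 1}`. -/
noncomputable instance : MeasurableSpace Circle := borel Circle
instance : BorelSpace Circle := ⟨rfl⟩

variable {G X : Type*}

/-- The diagonal action on a product. -/
def diag (a : G → X → X) : G → X × X → X × X := fun g p => (a g p.1, a g p.2)

/-- An action is ergodic if every measurable set invariant under every group element
has measure 0 or 1. -/
def IsErgodicAction [MeasurableSpace X] (a : G → X → X) (μ : Measure X) : Prop :=
  ∀ s : Set X, MeasurableSet s → (∀ g : G, a g ⁻¹' s = s) → μ s = 0 ∨ μ s = 1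

/-- An action is weakly mixing if the diagonal action on the square
(with the product measure) is ergodic. -/
def IsWeaklyMixing [MeasurableSpace X] (a : G → X → X) (μ : Measure X) : Prop :=
  IsErgodicAction (diag a) (μ.prod μ)

/-- A (p.m.p.) group action: `a : G → X → X` is an action of `G` and every `a g`
is measure preserving. -/
structure IsPmpAction [Group G] [MeasurableSpace X] (a : G → X → X) (μ : Measure X) :
    Prop where
  act_one : ∀ x, a 1 x = x
  act_mul : ∀ g h x, a (g * h) x = a g (a h x)
  measurePreserving : ∀ g, MeasurePreserving (a g) μ μ

/-- An algebraic action: an action of `G` by continuous (automatically bijective)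
additive automorphisms of a compact abelian group `X`. -/
structure IsAlgebraicAction [Group G] [AddCommGroup X] [TopologicalSpace X]
    (a : G → X → X) : Prop where
  act_one : ∀ x, a 1 x = x
  act_mul : ∀ g h x, a (g * h) x = a g (a h x)
  continuous : ∀ g, Continuous (a g)
  act_add : ∀ g x y, a g (x + y) = a g x + a g y

/-- A measurable `𝕋`-valued 1-cocycle for an action. -/
def IsCocycle1 [Group G] [MeasurableSpace X] (a : G → X → X) (μ : Measure X)
    (c : G → X → Circle) : Prop :=
  (∀ g, Measurable (c g)) ∧ ∀ g h : G, ∀ᵐ x ∂μ, c (g * h) x = c g x * c h (a g⁻¹ x)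

/-- An action is `𝕋`-cocycle superrigid if every measurable `𝕋`-valued 1-cocycle is
cohomologous to a group homomorphism `G → 𝕋`. -/
def IsCocycleSuperrigid [Group G] [MeasurableSpace X] (a : G → X → X) (μ : Measure X) :
    Prop :=
  ∀ c : G → X → Circle, IsCocycle1 a μ c →
    ∃ (lam : G →* Circle) (b : X → Circle), Measurable b ∧
      ∀ g : G, ∀ᵐ x ∂μ, c g x = lam g * (b (a g⁻¹ x) * (b x)⁻¹)

section Char

variable (X) [AddCommGroup X] [TopologicalSpace X]

/-- The Pontryagin dual `X̂` of a compact abelian group `X`: the group of continuous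
characters `X → 𝕋`, as a subgroup of the group of all functions `X → 𝕋`. -/
def charGroup : Subgroup (X → Circle) where
  carrier := {χ | Continuous χ ∧ ∀ x y, χ (x + y) = χ x * χ y}
  one_mem' := ⟨continuous_const, fun _ _ => (one_mul 1).symm⟩
  mul_mem' := fun h1 h2 => ⟨h1.1.mul h2.1, fun x y => by
    simp only [Pi.mul_apply, h1.2 x y, h2.2 x y]; exact mul_mul_mul_comm _ _ _ _⟩
  inv_mem' := fun h => ⟨h.1.inv, fun x y => by
    simp only [Pi.inv_apply, h.2 x y, mul_inv]⟩

end Char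

section Degree1

variable [Group G] [AddCommGroup X] [TopologicalSpace X]

/-- `Z¹(G, X̂)`: 1-cocycles of `G` with coefficients in the dual module `X̂`,
where `(g • χ) x = χ (a g⁻¹ x)`. -/
def modZ1 (a : G → X → X) : Subgroup (G → charGroup X) where
  carrier := {c | ∀ (g h : G) (x : X),
    ((c (g * h) : X → Circle)) x = (c h : X → Circle) (a g⁻¹ x) * (c g : X → Circle) x}
  one_mem' := by
    intro g h x
    simp
  mul_mem' := by
    intro c₁ c₂ h1 h2 g h x
    simp only [Pi.mul_apply, Subgroup.coe_mul]
    rw [h1 g h x, h2 g h x]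
    ac_rfl
  inv_mem' := by
    intro c hc g h x
    simp only [Pi.inv_apply, InvMemClass.coe_inv]
    rw [hc g h x, mul_inv]

/-- `B¹(G, X̂)`: 1-coboundaries. -/
def modB1 (a : G → X → X) : Subgroup (G → charGroup X) where
  carrier := {c | ∃ χ : charGroup X, ∀ (g : G) (x : X),
    (c g : X → Circle) x = (χ : X → Circle) (a g⁻¹ x) * ((χ : X → Circle) x)⁻¹}
  one_mem' := ⟨1, by intro g x; simp⟩
  mul_mem' := by
    rintro c₁ c₂ ⟨χ₁, h1⟩ ⟨χ₂, h2⟩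
    refine ⟨χ₁ * χ₂, fun g x => ?_⟩
    simp only [Pi.mul_apply, Subgroup.coe_mul]
    rw [h1 g x, h2 g x, mul_inv]
    ac_rfl
  inv_mem' := by
    rintro c ⟨χ, h⟩
    refine ⟨χ⁻¹, fun g x => ?_⟩
    simp only [Pi.inv_apply, InvMemClass.coe_inv]
    rw [h g x, mul_inv, inv_inv]

variable [MeasurableSpace X]

/-- Measurable `𝕋`-valued 1-cocycles for an action, as a subgroup of all maps
`G → X → 𝕋`. -/
def measZ1 (a : G → X → X) (μ : Measure X) : Subgroup (G → X → Circle) where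
  carrier := {c | (∀ g, Measurable (c g)) ∧
    ∀ g h : G, ∀ᵐ x ∂μ, c (g * h) x = c g x * c h (a g⁻¹ x)}
  one_mem' := ⟨fun _ => measurable_const, fun g h => ae_of_all _ fun x => by simp⟩
  mul_mem' := by
    rintro c₁ c₂ ⟨m1, h1⟩ ⟨m2, h2⟩
    refine ⟨fun g => (m1 g).mul (m2 g), fun g h => ?_⟩
    filter_upwards [h1 g h, h2 g h] with x e1 e2
    simp only [Pi.mul_apply]
    rw [e1, e2]
    ac_rfl
  inv_mem' := by
    rintro c ⟨m, hc⟩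
    refine ⟨fun g => (m g).inv, fun g h => ?_⟩
    filter_upwards [hc g h] with x e
    simp only [Pi.inv_apply]
    rw [e, mul_inv]

/-- The subgroup of measurable 1-cocycles that are cohomologous to (the cocycle
induced by) a group homomorphism `G → 𝕋`; this is the preimage in `Z¹(G ↷ X; 𝕋)` of
the subgroup `Ψ₁(H¹(G, 𝕋))` of `H¹(G ↷ X; 𝕋)`, so that
`H¹(G ↷ X; 𝕋)/Ψ₁(H¹(G, 𝕋)) = measZ1 ⧸ measBPsi1`. -/
def measBPsi1 (a : G → X → X) (μ : Measure X) : Subgroup (G → X → Circle) where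
  carrier := {c | ∃ (φ : G →* Circle) (b : X → Circle), Measurable b ∧
    ∀ g : G, ∀ᵐ x ∂μ, c g x = φ g * (b (a g⁻¹ x) * (b x)⁻¹)}
  one_mem' := ⟨1, 1, measurable_const, fun g => ae_of_all _ fun x => by simp⟩
  mul_mem' := by
    rintro c₁ c₂ ⟨φ₁, b₁, hb₁, h1⟩ ⟨φ₂, b₂, hb₂, h2⟩
    refine ⟨φ₁ * φ₂, b₁ * b₂, hb₁.mul hb₂, fun g => ?_⟩
    filter_upwards [h1 g, h2 g] with x e1 e2
    simp only [Pi.mul_apply, MonoidHom.mul_apply]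
    rw [e1, e2, mul_inv]
    ac_rfl
  inv_mem' := by
    rintro c ⟨φ, b, hb, h⟩
    refine ⟨φ⁻¹, b⁻¹, hb.inv, fun g => ?_⟩
    filter_upwards [h g] with x e
    simp only [Pi.inv_apply, MonoidHom.inv_apply]
    rw [e, mul_inv, mul_inv, inv_inv]

/-- The measurable cocycle induced by a module cocycle: evaluation of characters. -/
def ind1 (c : G → charGroup X) : G → X → Circle := fun g => (c g : X → Circle)

end Degree1

section Degree2

variable [Group G]

/-- A `𝕋`-valued 2-cocycle of the group `G` (for the trivial `G`-module `𝕋`). -/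
def IsGrpCocycle2 (θ : G → G → Circle) : Prop :=
  ∀ g₁ g₂ g₃ : G, θ g₂ g₃ * (θ (g₁ * g₂) g₃)⁻¹ * θ g₁ (g₂ * g₃) * (θ g₁ g₂)⁻¹ = 1

private lemma mul4 {M : Type*} [CommGroup M] {a₁ b₁ c₁ d₁ a₂ b₂ c₂ d₂ : M}
    (h₁ : a₁ * b₁⁻¹ * c₁ * d₁⁻¹ = 1) (h₂ : a₂ * b₂⁻¹ * c₂ * d₂⁻¹ = 1) :
    (a₁ * a₂) * (b₁ * b₂)⁻¹ * (c₁ * c₂) * (d₁ * d₂)⁻¹ = 1 := by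
  have e : (a₁ * a₂) * (b₁ * b₂)⁻¹ * (c₁ * c₂) * (d₁ * d₂)⁻¹
      = (a₁ * b₁⁻¹ * c₁ * d₁⁻¹) * (a₂ * b₂⁻¹ * c₂ * d₂⁻¹) := by
    simp only [mul_inv]; ac_rfl
  rw [e, h₁, h₂, one_mul]

private lemma inv4 {M : Type*} [CommGroup M] {a b c d : M}
    (h : a * b⁻¹ * c * d⁻¹ = 1) : a⁻¹ * b * c⁻¹ * d = 1 := by
  have e : a⁻¹ * b * c⁻¹ * d = (a * b⁻¹ * c * d⁻¹)⁻¹ := by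
    simp only [mul_inv, inv_inv]; try ac_rfl
  rw [e, h, inv_one]

variable [AddCommGroup X] [TopologicalSpace X]

/-- `Z²(G, X̂)`: 2-cocycles of `G` with coefficients in the dual module `X̂`. -/
def modZ2 (a : G → X → X) : Subgroup (G → G → charGroup X) where
  carrier := {c | ∀ (g₁ g₂ g₃ : G) (x : X),
    (c g₂ g₃ : X → Circle) (a g₁⁻¹ x) * ((c (g₁ * g₂) g₃ : X → Circle) x)⁻¹ *
      (c g₁ (g₂ * g₃) : X → Circle) x * ((c g₁ g₂ : X → Circle) x)⁻¹ = 1}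
  one_mem' := by intro g₁ g₂ g₃ x; simp
  mul_mem' := by
    intro c₁ c₂ h1 h2 g₁ g₂ g₃ x
    simp only [Pi.mul_apply, Subgroup.coe_mul]
    exact mul4 (h1 g₁ g₂ g₃ x) (h2 g₁ g₂ g₃ x)
  inv_mem' := by
    intro c hc g₁ g₂ g₃ x
    simp only [Pi.inv_apply, InvMemClass.coe_inv, inv_inv]
    exact inv4 (hc g₁ g₂ g₃ x)

/-- `B²(G, X̂)`: 2-coboundaries. -/
def modB2 (a : G → X → X) : Subgroup (G → G → charGroup X) where
  carrier := {c | ∃ b : G → charGroup X, ∀ (g h : G) (x : X),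
    (c g h : X → Circle) x =
      (b h : X → Circle) (a g⁻¹ x) * ((b (g * h) : X → Circle) x)⁻¹ * (b g : X → Circle) x}
  one_mem' := ⟨1, by intro g h x; simp⟩
  mul_mem' := by
    rintro c₁ c₂ ⟨b₁, h1⟩ ⟨b₂, h2⟩
    refine ⟨b₁ * b₂, fun g h x => ?_⟩
    simp only [Pi.mul_apply, Subgroup.coe_mul]
    rw [h1 g h x, h2 g h x, mul_inv]
    try ac_rfl
  inv_mem' := by
    rintro c ⟨b, hb⟩
    refine ⟨b⁻¹, fun g h x => ?_⟩
    simp only [Pi.inv_apply, InvMemClass.coe_inv]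
    rw [hb g h x]
    simp only [mul_inv, inv_inv]
    try ac_rfl

variable [MeasurableSpace X]

/-- Measurable `𝕋`-valued 2-cocycles for an action. -/
def measZ2 (a : G → X → X) (μ : Measure X) : Subgroup (G → G → X → Circle) where
  carrier := {c | (∀ g h, Measurable (c g h)) ∧
    ∀ g₁ g₂ g₃ : G, ∀ᵐ x ∂μ,
      c g₂ g₃ (a g₁⁻¹ x) * (c (g₁ * g₂) g₃ x)⁻¹ * c g₁ (g₂ * g₃) x * (c g₁ g₂ x)⁻¹ = 1}
  one_mem' := ⟨fun _ _ => measurable_const, fun g₁ g₂ g₃ => ae_of_all _ fun x => by simp⟩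
  mul_mem' := by
    rintro c₁ c₂ ⟨m1, h1⟩ ⟨m2, h2⟩
    refine ⟨fun g h => (m1 g h).mul (m2 g h), fun g₁ g₂ g₃ => ?_⟩
    filter_upwards [h1 g₁ g₂ g₃, h2 g₁ g₂ g₃] with x e1 e2
    simp only [Pi.mul_apply]
    exact mul4 e1 e2
  inv_mem' := by
    rintro c ⟨m, hc⟩
    refine ⟨fun g h => (m g h).inv, fun g₁ g₂ g₃ => ?_⟩
    filter_upwards [hc g₁ g₂ g₃] with x e
    simp only [Pi.inv_apply, inv_inv]
    exact inv4 e

/-- The subgroup of measurable 2-cocycles that are cohomologous to a constant (in the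
space variable) 2-cocycle coming from a group 2-cocycle `θ : G² → 𝕋`; this is the
preimage in `Z²(G ↷ X; 𝕋)` of the subgroup `Ψ₂(H²(G, 𝕋))` of `H²(G ↷ X; 𝕋)`, so that
`H²(G ↷ X; 𝕋)/Ψ₂(H²(G, 𝕋)) = measZ2 ⧸ measBPsi2`. -/
def measBPsi2 (a : G → X → X) (μ : Measure X) : Subgroup (G → G → X → Circle) where
  carrier := {c | ∃ (θ : G → G → Circle) (b : G → X → Circle), IsGrpCocycle2 θ ∧
    (∀ g, Measurable (b g)) ∧
    ∀ g h : G, ∀ᵐ x ∂μ, c g h x = θ g h * (b h (a g⁻¹ x) * (b (g * h) x)⁻¹ * b g x)}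
  one_mem' := ⟨fun _ _ => 1, fun _ => 1, fun g₁ g₂ g₃ => by simp, fun _ => measurable_const,
    fun g h => ae_of_all _ fun x => by simp⟩
  mul_mem' := by
    rintro c₁ c₂ ⟨θ₁, b₁, hθ₁, hb₁, h1⟩ ⟨θ₂, b₂, hθ₂, hb₂, h2⟩
    refine ⟨fun g h => θ₁ g h * θ₂ g h, fun g => b₁ g * b₂ g,
      fun g₁ g₂ g₃ => mul4 (hθ₁ g₁ g₂ g₃) (hθ₂ g₁ g₂ g₃),
      fun g => (hb₁ g).mul (hb₂ g), fun g h => ?_⟩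
    filter_upwards [h1 g h, h2 g h] with x e1 e2
    simp only [Pi.mul_apply]
    rw [e1, e2]
    simp only [mul_inv]
    ac_rfl
  inv_mem' := by
    rintro c ⟨θ, b, hθ, hb, hc⟩
    refine ⟨fun g h => (θ g h)⁻¹, fun g => (b g)⁻¹,
      fun g₁ g₂ g₃ => by simpa only [inv_inv] using inv4 (hθ g₁ g₂ g₃),
      fun g => (hb g).inv, fun g h => ?_⟩
    filter_upwards [hc g h] with x e
    simp only [Pi.inv_apply]
    rw [e]
    simp only [mul_inv, inv_inv]
    try ac_rfl

/-- The measurable 2-cocycle induced by a module 2-cocycle: evaluation of characters. -/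
def ind2 (c : G → G → charGroup X) : G → G → X → Circle := fun g h => (c g h : X → Circle)

end Degree2


section Bernoulli

/-- The Bernoulli shift action `G ↷ X₀^G`, `(g • x) h = x (g⁻¹ h)`. -/
def bernoulliShift (G X₀ : Type*) [Group G] : G → (G → X₀) → (G → X₀) :=
  fun g x h => x (g⁻¹ * h)

/-- `μ` is the product along `ι` of copies of `μ₀`: it gives every finite-dimensional
cylinder set its product measure.  (This characterizes the Bernoulli product measure
`μ₀^ι` uniquely.) -/
def IsBernoulliMeasure {ι X₀ : Type*} [MeasurableSpace X₀] (μ₀ : Measure X₀)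
    (μ : Measure (ι → X₀)) : Prop :=
  ∀ (s : Finset ι) (t : ι → Set X₀), (∀ i, MeasurableSet (t i)) →
    μ {x | ∀ i ∈ s, x i ∈ t i} = ∏ i ∈ s, μ₀ (t i)

/-- The class `𝒢` of countable groups `G` such that for every standard probability
space `(X₀, μ₀)` the Bernoulli shift `G ↷ (X₀^G, μ₀^G)` is `𝕋`-cocycle superrigid. -/
def InClassG (G : Type*) [Group G] : Prop :=
  ∀ (X₀ : Type) [MeasurableSpace X₀] [StandardBorelSpace X₀]
    (μ₀ : Measure X₀) [IsProbabilityMeasure μ₀]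
    (μ : Measure (G → X₀)) [IsProbabilityMeasure μ],
    IsBernoulliMeasure μ₀ μ → IsCocycleSuperrigid (bernoulliShift G X₀) μ

end Bernoulli


section Aux

open scoped ComplexConjugate

lemma circle_coe_meas : Measurable (fun z : Circle => (z : ℂ)) := by
  have h : Continuous (fun z : Circle => (z : ℂ)) := by fun_prop
  exact h.measurable

lemma algebra_part {G : Type} [Group G] [Infinite G] {k : ℕ}
    (c : G → (G →₀ ZMod k))
    (hc : ∀ g h a, c (g * h) a = c h (g⁻¹ * a) + c g a)
    (f0 : G →₀ ZMod k) (S : Set (G →₀ ZMod k)) (hS : S.Finite)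
    (hmem : ∀ g, c g + Finsupp.mapDomain (g * ·) f0 ∈ S) :
    ∀ g a, c g a = f0 a - f0 (g⁻¹ * a) := by
  classical
  have hmd : ∀ (g : G) (a : G), Finsupp.mapDomain (g * ·) f0 a = f0 (g⁻¹ * a) := by
    intro g a
    have := Finsupp.mapDomain_apply (mul_right_injective g) f0 (g⁻¹ * a)
    simpa using this
  intro h p
  by_contra hne
  let d : G → G → ZMod k := fun g a => c g a + f0 (g⁻¹ * a) - f0 a
  have hd0 : d h p ≠ 0 := by
    intro h0
    apply hne
    have h1 : c h p + f0 (h⁻¹ * p) - f0 p = 0 := h0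
    linear_combination h1
  let F : Finset G := (hS.toFinset.biUnion fun f => f.support) ∪ f0.support
  have hF : ∀ g a, a ∉ F → d g a = 0 := by
    intro g a ha
    simp only [F, Finset.mem_union, Finset.mem_biUnion, Set.Finite.mem_toFinset, not_or,
      not_exists, not_and, Finsupp.mem_support_iff, not_not] at ha
    have h1 := ha.1 _ (hmem g)
    simp only [Finsupp.add_apply, hmd] at h1
    simp [d, h1, ha.2]
  have hinf : (Set.range fun g : G => g * p).Infinite :=
    Set.infinite_range_of_injective (mul_left_injective p)
  obtain ⟨a, ⟨g, rfl⟩, hg⟩ := hinf.exists_notMem_finset F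
  apply hd0
  have e1 := hF g _ hg
  have e2 := hF (g * h) _ hg
  simp only [d, hc, mul_inv_rev] at e1 e2 ⊢
  simp only [inv_mul_cancel_left, mul_assoc] at e1 e2
  linear_combination e2 - e1

variable {G : Type} {k : ℕ} [NeZero k]

/-- The phase of a character. -/
def ph (f : G →₀ ZMod k) (x : G → Fin k) : ZMod k :=
  f.sum fun h a => a * ((x h : ℕ) : ZMod k)

/-- The character attached to `f`. -/
def chi (f : G →₀ ZMod k) (x : G → Fin k) : Circle := ZMod.toCircle (ph f x)

lemma ph_add (f f' : G →₀ ZMod k) (x : G → Fin k) : ph (f + f') x = ph f x + ph f' x :=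
  Finsupp.sum_add_index' (by simp) (by intros; ring)

lemma chi_add (f f' : G →₀ ZMod k) (x : G → Fin k) : chi (f + f') x = chi f x * chi f' x := by
  simp [chi, ph_add, AddChar.map_add_eq_mul]

lemma chi_zero (x : G → Fin k) : chi (0 : G →₀ ZMod k) x = 1 := by
  simp [chi, ph, AddChar.map_zero_eq_one]

lemma chi_neg (f : G →₀ ZMod k) (x : G → Fin k) : chi (-f) x = (chi f x)⁻¹ := by
  rw [eq_inv_iff_mul_eq_one, ← chi_add, neg_add_cancel, chi_zero]

lemma ph_single (i : G) (j : ZMod k) (x : G → Fin k) :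
    ph (Finsupp.single i j) x = j * ((x i : ℕ) : ZMod k) := by
  simp [ph]

lemma chi_measurable (f : G →₀ ZMod k) : Measurable (chi f) := by
  have : chi f = fun x => ∏ h ∈ f.support, ZMod.toCircle (f h * ((x h : ℕ) : ZMod k)) := by
    classical
    funext x
    have hs : ∀ s : Finset G, ZMod.toCircle (∑ h ∈ s, f h * ((x h : ℕ) : ZMod k))
        = ∏ h ∈ s, ZMod.toCircle (f h * ((x h : ℕ) : ZMod k)) := by
      intro s
      induction s using Finset.induction_on with
      | empty => simp [AddChar.map_zero_eq_one]
      | insert i s hi ih =>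
        rw [Finset.sum_insert hi, Finset.prod_insert hi, AddChar.map_add_eq_mul, ih]
    exact hs f.support
  rw [this]
  refine Finset.measurable_prod _ fun h _ => ?_
  exact (measurable_of_countable (fun y : Fin k => ZMod.toCircle (f h * ((y : ℕ) : ZMod k)))).comp
    (measurable_pi_apply h)

lemma chi_shift [Group G] (g : G) (f : G →₀ ZMod k) (x : G → Fin k) :
    chi (Finsupp.mapDomain (g * ·) f) x = chi f (bernoulliShift G (Fin k) g⁻¹ x) := by
  unfold chi ph
  rw [Finsupp.sum_mapDomain_index (by simp) (by intros; ring)]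
  simp [bernoulliShift]

lemma bern_unique {ν : Measure (Fin k)} [IsProbabilityMeasure ν]
    {μ : Measure (G → Fin k)} (hμ : IsBernoulliMeasure ν μ) :
    μ = Measure.infinitePi (fun _ : G => ν) :=
  Measure.eq_infinitePi _ fun s t ht => hμ s t ht

lemma bern_mp {ν : Measure (Fin k)} [IsProbabilityMeasure ν]
    {μ : Measure (G → Fin k)} (hμ : IsBernoulliMeasure ν μ)
    (e : G ≃ G) (σ : G → Fin k → Fin k) (hσ : ∀ i, MeasurePreserving (σ i) ν ν) :
    MeasurePreserving (fun (x : G → Fin k) h => σ h (x (e h))) μ μ := by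
  classical
  have hm : Measurable (fun (x : G → Fin k) h => σ h (x (e h))) :=
    measurable_pi_lambda _ fun h => (hσ h).measurable.comp (measurable_pi_apply _)
  refine ⟨hm, ?_⟩
  have : IsBernoulliMeasure ν (μ.map (fun (x : G → Fin k) h => σ h (x (e h)))) := by
    intro s t ht
    rw [Measure.map_apply hm]
    · have h1 := hμ (s.map e.toEmbedding) (fun i => σ (e.symm i) ⁻¹' t (e.symm i))
        (fun i => (hσ _).measurable (ht _))
      simp only [Finset.prod_map, Equiv.coe_toEmbedding, Equiv.symm_apply_apply,
        (hσ _).measure_preimage (ht _).nullMeasurableSet] at h1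
      rw [← h1]
      congr 1
      ext x
      simp only [Set.mem_preimage, Set.mem_ofPred_eq, Finset.mem_map_equiv]
      constructor
      · intro h i hi
        simpa using h _ hi
      · intro h i hi
        simpa using h (e i) (by simpa using hi)
    · have : {x : G → Fin k | ∀ i ∈ s, x i ∈ t i} = (s : Set G).pi t := by
        ext x; simp
      rw [this]
      exact MeasurableSet.pi s.countable_toSet fun i _ => ht i
  rw [bern_unique this, ← bern_unique hμ]

lemma unif_mp {ν : Measure (Fin k)} [IsProbabilityMeasure ν]
    (hunif : ∀ i : Fin k, ν {i} = (k : ENNReal)⁻¹) (e : Fin k ≃ Fin k) :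
    MeasurePreserving e ν ν := by
  refine ⟨measurable_of_countable _, ?_⟩
  refine Measure.ext_of_singleton fun i => ?_
  rw [Measure.map_apply (measurable_of_countable _) (measurableSet_singleton _)]
  have : e ⁻¹' {i} = {e.symm i} := by
    ext x; simp [Equiv.eq_symm_apply]
  rw [this, hunif, hunif]

lemma int_chi {ν : Measure (Fin k)} [IsProbabilityMeasure ν]
    (hunif : ∀ i : Fin k, ν {i} = (k : ENNReal)⁻¹)
    {μ : Measure (G → Fin k)} [IsProbabilityMeasure μ] (hμ : IsBernoulliMeasure ν μ)
    (f : G →₀ ZMod k) (hf : f ≠ 0) : ∫ x, (chi f x : ℂ) ∂μ = 0 := by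
  classical
  obtain ⟨p, hp⟩ := Finsupp.ne_iff.1 hf
  let σ : G → Fin k → Fin k := fun i => if i = p then Equiv.addRight 1 else Equiv.refl _
  have hT := bern_mp hμ (Equiv.refl G) σ (fun i => by
    by_cases h : i = p
    · simpa [σ, h] using unif_mp hunif (Equiv.addRight 1)
    · simpa [σ, h] using unif_mp hunif (Equiv.refl _))
  have hph : ∀ x : G → Fin k, ph f (fun h => σ h (x h)) = f p + ph f x := by
    intro x
    have h1 : ∀ h, ((σ h (x h) : ℕ) : ZMod k) = (if h = p then 1 else 0) + ((x h : ℕ) : ZMod k) := by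
      intro h
      by_cases hh : h = p
      · simp [σ, hh, Fin.val_add, add_comm]
      · simp [σ, hh]
    simp only [ph, h1, Finsupp.sum, mul_add, Finset.sum_add_distrib]
    congr 1
    simp
    exact fun h => h.symm
  have hchi : ∀ x : G → Fin k, (chi f (fun h => σ h (x h)) : ℂ)
      = ZMod.toCircle (f p) * (chi f x : ℂ) := by
    intro x
    simp [chi, hph, AddChar.map_add_eq_mul]
  have h2 : ∫ x, (chi f (fun h => σ h (x h)) : ℂ) ∂μ = ∫ x, (chi f x : ℂ) ∂μ := by
    have hmm : Measurable fun x => (chi f x : ℂ) :=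
      circle_coe_meas.comp (chi_measurable f)
    have h3 := integral_map (μ := μ) hT.measurable.aemeasurable
      (f := fun x => (chi f x : ℂ)) hmm.aestronglyMeasurable
    rw [hT.map_eq] at h3
    exact h3.symm
  simp only [hchi] at h2
  rw [integral_const_mul] at h2
  have h4 : (ZMod.toCircle (f p) : ℂ) ≠ 1 := by
    intro h
    apply hp
    apply ZMod.injective_toCircle
    ext
    simpa [AddChar.map_zero_eq_one] using h
  have h5 : ((ZMod.toCircle (f p) : ℂ) - 1) * ∫ x, (chi f x : ℂ) ∂μ = 0 := by
    linear_combination h2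
  rcases mul_eq_zero.1 h5 with h | h
  · exact absurd (sub_eq_zero.1 h) h4
  · exact h

lemma chi_measC (f : G →₀ ZMod k) : Measurable fun x => (chi f x : ℂ) :=
  circle_coe_meas.comp (chi_measurable f)

lemma memLp_circle {μ : Measure (G → Fin k)} [IsProbabilityMeasure μ]
    {b : (G → Fin k) → Circle} (hb : Measurable b) (p : ENNReal) :
    MemLp (fun x => (b x : ℂ)) p μ :=
  MemLp.of_bound (circle_coe_meas.comp hb).aestronglyMeasurable 1
    (ae_of_all _ fun x => (Circle.norm_coe (b x)).le)

lemma integrable_circle {μ : Measure (G → Fin k)} [IsProbabilityMeasure μ]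
    {b : (G → Fin k) → Circle} (hb : Measurable b) :
    Integrable (fun x => (b x : ℂ)) μ :=
  memLp_one_iff_integrable.1 (memLp_circle hb 1)

lemma bessel {ν : Measure (Fin k)} [IsProbabilityMeasure ν]
    (hunif : ∀ i : Fin k, ν {i} = (k : ENNReal)⁻¹)
    {μ : Measure (G → Fin k)} [IsProbabilityMeasure μ] (hμ : IsBernoulliMeasure ν μ)
    {b : (G → Fin k) → Circle} (hb : Measurable b) (ε : ℝ) (hε : 0 < ε) :
    {f : G →₀ ZMod k | ε = ‖∫ x, ((b x * chi f x : Circle) : ℂ) ∂μ‖}.Finite := by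
  let v : (G →₀ ZMod k) → Lp ℂ 2 μ := fun f => (memLp_circle (chi_measurable (-f)) 2).toLp _
  let w : Lp ℂ 2 μ := (memLp_circle hb 2).toLp _
  have hin : ∀ (f : G →₀ ZMod k) (u : (G → Fin k) → Circle) (hu : Measurable u),
      inner ℂ (v f) ((memLp_circle hu 2).toLp _ : Lp ℂ 2 μ)
        = ∫ x, ((u x * chi f x : Circle) : ℂ) ∂μ := by
    intro f u hu
    rw [L2.inner_def]
    apply integral_congr_ae
    filter_upwards [(memLp_circle (μ := μ) (chi_measurable (-f)) 2).coeFn_toLp,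
      (memLp_circle (μ := μ) hu 2).coeFn_toLp] with x h1 h2
    simp only [v]
    rw [h1, h2, RCLike.inner_apply, chi_neg, Circle.coe_inv_eq_conj, Complex.conj_conj,
      Circle.coe_mul]
  have hv : Orthonormal ℂ v := by
    classical
    rw [orthonormal_iff_ite]
    intro f f'
    rw [hin f _ (chi_measurable (-f'))]
    simp only [← chi_add]
    split_ifs with h
    · simp [h, chi_zero]
    · apply int_chi hunif hμ
      intro h0
      exact h (by rwa [neg_add_eq_zero, eq_comm] at h0)
  have hs : Summable fun f => ‖inner ℂ (v f) w‖ ^ 2 := hv.inner_products_summable w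
  have := hs.tendsto_cofinite_zero.eventually (gt_mem_nhds (show 0 < ε ^ 2 by positivity))
  rw [Filter.eventually_cofinite] at this
  refine this.subset ?_
  intro f hf
  simp only [Set.mem_ofPred_eq] at hf ⊢
  rw [hin f b hb, ← hf]
  exact lt_irrefl _

lemma cyl_zero {μ : Measure (G → Fin k)} [IsProbabilityMeasure μ]
    {b : (G → Fin k) → Circle} (hb : Measurable b)
    (h0 : ∀ f : G →₀ ZMod k, ∫ x, ((b x * chi f x : Circle) : ℂ) ∂μ = 0)
    (s : Finset G) (t : G → Set (Fin k)) : ∀ f : G →₀ ZMod k,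
    ∫ x in (s : Set G).pi t, ((b x * chi f x : Circle) : ℂ) ∂μ = 0 := by
  classical
  induction s using Finset.induction_on with
  | empty => intro f; simpa using h0 f
  | insert i s hi ih =>
    intro f
    have hms : ∀ s : Finset G, MeasurableSet ((s : Set G).pi t) := fun s =>
      MeasurableSet.pi s.countable_toSet fun i _ => Set.Finite.measurableSet (Set.toFinite _)
    have hset : ((insert i s : Finset G) : Set G).pi t
        = (s : Set G).pi t ∩ (fun x : G → Fin k => x i) ⁻¹' t i := by
      ext x; simp [and_comm]
    have hm2 : MeasurableSet ((fun x : G → Fin k => x i) ⁻¹' t i) :=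
      measurable_pi_apply i (Set.Finite.measurableSet (Set.toFinite _))
    rw [hset, ← setIntegral_indicator hm2]
    have hk0 : (k : ℂ) ≠ 0 := Nat.cast_ne_zero.2 (NeZero.ne k)
    have key : ∀ x : G → Fin k, ((fun x : G → Fin k => x i) ⁻¹' t i).indicator
          (fun x => ((b x * chi f x : Circle) : ℂ)) x
        = ∑ a : Fin k, ∑ j : ZMod k,
          (if a ∈ t i then (k : ℂ)⁻¹ * ZMod.toCircle (-(j * ((a : ℕ) : ZMod k))) else 0) *
            ((b x * chi (f + Finsupp.single i j) x : Circle) : ℂ) := by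
      intro x
      have e1 : ∀ a : Fin k, ∑ j : ZMod k, ((ZMod.toCircle (-(j * ((a : ℕ) : ZMod k))) : ℂ) *
          ZMod.toCircle (j * ((x i : ℕ) : ZMod k))) = if x i = a then (k : ℂ) else 0 := by
        intro a
        have := AddChar.sum_mulShift (((x i : ℕ) : ZMod k) - ((a : ℕ) : ZMod k))
          (ZMod.isPrimitive_stdAddChar k)
        rw [ZMod.card] at this
        have hiff : (((x i : ℕ) : ZMod k) - ((a : ℕ) : ZMod k) = 0) ↔ x i = a := by
          rw [sub_eq_zero, ZMod.natCast_eq_natCast_iff', Nat.mod_eq_of_lt (x i).2,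
            Nat.mod_eq_of_lt a.2, Fin.ext_iff]
        simp only [hiff] at this
        trans ((if x i = a then k else 0 : ℕ) : ℂ)
        · rw [← this]
          refine Finset.sum_congr rfl fun j _ => ?_
          rw [ZMod.stdAddChar_apply, mul_sub, sub_eq_neg_add, AddChar.map_add_eq_mul,
            Circle.coe_mul]
        · split_ifs <;> simp
      have e2 : ∀ a : Fin k, ∑ j : ZMod k,
          (if a ∈ t i then (k : ℂ)⁻¹ * ZMod.toCircle (-(j * ((a : ℕ) : ZMod k))) else 0) *
            ((b x * chi (f + Finsupp.single i j) x : Circle) : ℂ)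
          = (if a ∈ t i then (k : ℂ)⁻¹ * ((b x * chi f x : Circle) : ℂ) else 0) *
            (if x i = a then (k : ℂ) else 0) := by
        intro a
        rw [← e1 a, Finset.mul_sum]
        refine Finset.sum_congr rfl fun j _ => ?_
        rw [chi_add]
        simp only [chi, ph_single, Circle.coe_mul]
        split_ifs <;> ring
      simp only [e2]
      simp only [mul_ite, mul_zero, Finset.sum_ite_eq, Finset.mem_univ, if_true]
      simp only [Set.indicator, Set.mem_preimage]
      split_ifs
      · field_simp
      · simp
    simp only [key]
    have hint : ∀ (f : G →₀ ZMod k),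
        Integrable (fun x => ((b x * chi f x : Circle) : ℂ)) (μ.restrict ((s : Set G).pi t)) :=
      fun f => (integrable_circle (hb.mul (chi_measurable f))).integrableOn
    rw [integral_finsetSum _ fun a _ => integrable_finsetSum _ fun j _ => (hint _).const_mul _]
    refine Finset.sum_eq_zero fun a _ => ?_
    rw [integral_finsetSum _ fun j _ => (hint _).const_mul _]
    refine Finset.sum_eq_zero fun j _ => ?_
    rw [integral_const_mul, ih, mul_zero]

lemma exists_coeff {μ : Measure (G → Fin k)} [IsProbabilityMeasure μ]
    {b : (G → Fin k) → Circle} (hb : Measurable b) :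
    ∃ f : G →₀ ZMod k, ∫ x, ((b x * chi f x : Circle) : ℂ) ∂μ ≠ 0 := by
  by_contra! h0
  have hint := integrable_circle (μ := μ) hb
  have hz : ∀ s : Set (G → Fin k), MeasurableSet s → ∫ x in s, (b x : ℂ) ∂μ = 0 := by
    intro s hs
    have huniv : ∫ x, (b x : ℂ) ∂μ = 0 := by simpa [chi_zero] using h0 0
    induction s, hs using MeasurableSpace.induction_on_inter generateFrom_squareCylinders.symm
      (isPiSystem_squareCylinders (fun _ => MeasurableSpace.isPiSystem_measurableSet) (by simp))
      with
    | empty => simp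
    | basic s hs =>
      obtain ⟨I, t, -, rfl⟩ := hs
      simpa [chi_zero] using cyl_zero hb h0 I t 0
    | compl s hs ih =>
      have := integral_add_compl hs hint
      rw [ih, huniv, zero_add] at this
      exact this
    | iUnion f hd hm ih =>
      rw [integral_iUnion hm hd hint.integrableOn]
      simp [ih]
  have := ae_eq_zero_of_forall_setIntegral_eq_of_sigmaFinite
    (fun s _ _ => hint.integrableOn) (fun s hs _ => hz s hs)
  obtain ⟨x, hx⟩ := this.exists
  simp at hx

lemma core [Group G] [Infinite G]
    (ν : Measure (Fin k)) [IsProbabilityMeasure ν] (hunif : ∀ i : Fin k, ν {i} = (k : ENNReal)⁻¹)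
    (μ : Measure (G → Fin k)) [IsProbabilityMeasure μ] (hμ : IsBernoulliMeasure ν μ)
    (hsurj : IsCocycleSuperrigid (bernoulliShift G (Fin k)) μ)
    (c : G → (G →₀ ZMod k))
    (hc : ∀ g h a, c (g * h) a = c h (g⁻¹ * a) + c g a) :
    ∃ f0 : G →₀ ZMod k, ∀ g a, c g a = f0 a - f0 (g⁻¹ * a) := by
  have hmd : ∀ (f : G →₀ ZMod k) (g : G) (a : G),
      Finsupp.mapDomain (g * ·) f a = f (g⁻¹ * a) := by
    intro f g a
    have := Finsupp.mapDomain_apply (mul_right_injective g) f (g⁻¹ * a)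
    simpa using this
  obtain ⟨lam, b, hb, heq⟩ := hsurj (fun g x => chi (c g) x)
    ⟨fun g => chi_measurable _, fun g h => ae_of_all _ fun x => by
      have : c (g * h) = c g + Finsupp.mapDomain (g * ·) (c h) := by
        ext a; simp [hc, hmd, add_comm]
      change chi (c (g * h)) x = chi (c g) x * chi (c h) (bernoulliShift G (Fin k) g⁻¹ x)
      rw [← chi_shift, ← chi_add, this]⟩
  obtain ⟨f0, hf0⟩ := exists_coeff (k := k) (μ := μ) hb
  refine ⟨f0, algebra_part c hc f0 _ (bessel hunif hμ hb _ (norm_pos_iff.2 hf0)) ?_⟩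
  intro g
  simp only [Set.mem_ofPred_eq]
  have hmp : MeasurePreserving (bernoulliShift G (Fin k) g⁻¹) μ μ :=
    bern_mp hμ (Equiv.mulLeft g⁻¹⁻¹) (fun _ => id) fun _ => MeasurePreserving.id _
  have h1 : ∫ x, ((b x * chi (c g + Finsupp.mapDomain (g * ·) f0) x : Circle) : ℂ) ∂μ
      = ∫ x, (lam g : ℂ) * ((b (bernoulliShift G (Fin k) g⁻¹ x) *
          chi f0 (bernoulliShift G (Fin k) g⁻¹ x) : Circle) : ℂ) ∂μ := by
    apply integral_congr_ae
    filter_upwards [heq g] with x hx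
    rw [← Circle.coe_mul, chi_add, chi_shift, hx]
    congr 1
    calc _ = (b x * (b x)⁻¹) * (lam g * (b (bernoulliShift G (Fin k) g⁻¹ x) *
          chi f0 (bernoulliShift G (Fin k) g⁻¹ x))) := by ac_rfl
      _ = _ := by simp
  have h2 : ∫ x, ((b (bernoulliShift G (Fin k) g⁻¹ x) *
          chi f0 (bernoulliShift G (Fin k) g⁻¹ x) : Circle) : ℂ) ∂μ
      = ∫ x, ((b x * chi f0 x : Circle) : ℂ) ∂μ := by
    have hmm : Measurable fun x => ((b x * chi f0 x : Circle) : ℂ) :=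
      circle_coe_meas.comp (hb.mul (chi_measurable f0))
    have h3 := integral_map (μ := μ) hmp.measurable.aemeasurable
      (f := fun x => ((b x * chi f0 x : Circle) : ℂ)) hmm.aestronglyMeasurable
    rw [hmp.map_eq] at h3
    exact h3.symm
  rw [h1, integral_const_mul, h2, norm_mul, Circle.norm_coe, one_mul]

end Aux

/-- Let `G ∈ 𝒢` be countable infinite, `k ≥ 2`, and consider the
Bernoulli shift `G ↷ ([k]^G, ν_k^G)` where `ν_k` is the uniform probability measure on
the `k`-point set `[k] = Fin k`.  If `Ψ₁ : H¹(G, 𝕋) → H¹(G ↷ [k]^G; 𝕋)` is surjective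
— equivalently, this shift is `𝕋`-cocycle superrigid — then `H¹(G, ℤG/kℤG) = 0`, where
`ℤG/kℤG` is realized as the group algebra of `G` over `ℤ/kℤ` with the left regular
`G`-action. -/
theorem h1_zg_mod_k_trivial_of_psi1_surjective
    (G : Type) [Group G] [Countable G] [Infinite G] (hG : InClassG G)
    (k : ℕ) (hk : 2 ≤ k)
    (ν : Measure (Fin k)) [IsProbabilityMeasure ν] (hunif : ∀ i : Fin k, ν {i} = (k : ENNReal)⁻¹)
    (μ : Measure (G → Fin k)) [IsProbabilityMeasure μ] (hμ : IsBernoulliMeasure ν μ)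
    (hsurj : IsCocycleSuperrigid (bernoulliShift G (Fin k)) μ) :
    ∀ x : groupCohomology.H1 (Rep.ofMulAction (ZMod k) G G), x = 0 := by
  haveI : NeZero k := ⟨by omega⟩
  intro x
  induction x using groupCohomology.H1_induction_on with
  | h z =>
    rw [groupCohomology.H1π_eq_zero_iff]
    have hz := (groupCohomology.mem_cocycles₁_iff (A := Rep.ofMulAction (ZMod k) G G) z).1 z.2
    have hrho : ∀ (g : G) (m : MonoidAlgebra (ZMod k) G) (a : G),
        (Representation.ofMulAction (ZMod k) G G g m).coeff a = m.coeff (g⁻¹ * a) := by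
      intro g m a
      have := Finsupp.mapDomain_apply (mul_right_injective g) m.coeff (g⁻¹ * a)
      simpa [Representation.ofMulAction_def] using this
    let c : G → (G →₀ ZMod k) := fun g => MonoidAlgebra.coeff (z g)
    obtain ⟨f0, hf0⟩ := core ν hunif μ hμ hsurj c (by
      intro g h a
      have := congrArg (fun m => (MonoidAlgebra.coeff m) a) (hz g h)
      simp only [c]
      rw [← hrho]
      exact this)
    refine ⟨(MonoidAlgebra.ofCoeff (-f0) : MonoidAlgebra (ZMod k) G), ?_⟩
    funext g
    apply MonoidAlgebra.coeff_injective
    ext a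
    change (Representation.ofMulAction (ZMod k) G G g (MonoidAlgebra.ofCoeff (-f0))
      - MonoidAlgebra.ofCoeff (-f0)).coeff a = c g a
    rw [hf0, MonoidAlgebra.coeff_sub, Finsupp.sub_apply, hrho]
    simp
    ring

end AlgActCohomology
end
end

section
/- Let G be a countable infinite discrete group and k ≥ 2 an integer. If the Bernoulli shift G ↷ ([k]^G, ν_k^G), where [k] is a k-element set and ν_k the uniform probability measure on it, is 𝕋-cocycle superrigid, then H¹(G, ℤG/kℤG) = 0. -/
open MeasureTheory

noncomputable section

namespace AlgActCohomology

variable {G X : Type*}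

section Aux

set_option linter.unusedSectionVars false

lemma continuous_coe_circle : Continuous (fun z : Circle => (z : ℂ)) := continuous_subtype_val

lemma conj_circle (z : Circle) : (starRingEnd ℂ) (z : ℂ) = (z : ℂ)⁻¹ := by
  rw [← Circle.coe_inv_eq_conj, Circle.coe_inv]

lemma norm_circle (z : Circle) : ‖(z : ℂ)‖ = 1 := Circle.norm_coe z

/-- Left translation on finitely supported functions. -/
def tr {G R : Type*} [Group G] [AddCommGroup R] (g : G) (m : G →₀ R) : G →₀ R :=
  Finsupp.mapDomain (fun h => g * h) m

lemma tr_sub {G R : Type*} [Group G] [AddCommGroup R] (g : G) (m m' : G →₀ R) :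
    tr g (m - m') = tr g m - tr g m' :=
  map_sub (Finsupp.mapDomain.addMonoidHom (M := R) (fun h : G => g * h)) m m'

lemma tr_apply_mul {G R : Type*} [Group G] [AddCommGroup R] (g h : G) (m : G →₀ R) :
    tr g m (g * h) = m h :=
  Finsupp.mapDomain_apply (mul_right_injective g) m h

/-- A finitely supported function with finite orbit under an infinite group is zero. -/
lemma eq_zero_of_finite_orbit {G R : Type*} [Group G] [Infinite G] [AddCommGroup R]
    (d : G →₀ R) (hd : (Set.range fun g : G => tr g d).Finite) : d = 0 := by
  by_contra hne
  obtain ⟨s, hs⟩ := Finsupp.ne_iff.1 hne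
  have hfin : (⋃ e ∈ (Set.range fun g : G => tr g d), ((e.support : Finset G) : Set G)).Finite :=
    hd.biUnion fun e _ => e.support.finite_toSet
  have hsub : (Set.range fun g : G => g * s) ⊆
      ⋃ e ∈ (Set.range fun g : G => tr g d), ((e.support : Finset G) : Set G) := by
    rintro _ ⟨g, rfl⟩
    refine Set.mem_biUnion ⟨g, rfl⟩ ?_
    simp only [Finset.mem_coe, Finsupp.mem_support_iff, tr_apply_mul]
    simpa using hs
  exact Set.infinite_range_of_injective (mul_left_injective s) (hfin.subset hsub)

lemma exists_fixed {G R : Type*} [Group G] [Infinite G] [AddCommGroup R]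
    (c : G → G →₀ R) (N : (G →₀ R) → ℝ) (hN : Summable fun m => N m ^ 2)
    (m₀ : G →₀ R) (hm₀ : N m₀ ≠ 0)
    (hinv : ∀ g m, N (tr g m - c g) = N m) :
    ∃ m, ∀ g, tr g m - m = c g := by
  have hF : {m | N m = N m₀}.Finite := by
    have h1 := hN.tendsto_cofinite_zero
    have h2 : ∀ᶠ m in Filter.cofinite, N m ^ 2 < N m₀ ^ 2 :=
      h1.eventually (gt_mem_nhds (by positivity))
    refine (Filter.eventually_cofinite.1 h2).subset ?_
    intro m hm
    simp only [Set.mem_ofPred_eq] at hm ⊢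
    rw [hm]; exact lt_irrefl _
  refine ⟨m₀, fun g => ?_⟩
  have key : (tr g m₀ - c g) - m₀ = 0 := by
    apply eq_zero_of_finite_orbit
    refine (hF.sub hF).subset ?_
    rintro _ ⟨h, rfl⟩
    refine ⟨tr h (tr g m₀ - c g) - c h, ?_, tr h m₀ - c h, ?_, ?_⟩
    · simp only [Set.mem_ofPred_eq, hinv]
    · simp only [Set.mem_ofPred_eq, hinv]
    · simp only [tr_sub]; abel
  rw [sub_right_comm, sub_eq_zero] at key
  exact key

variable {G : Type} [Group G] {k : ℕ} [NeZero k]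

/-- The pairing between finitely supported functions and points of `[k]^G`. -/
def pr (m : G →₀ ZMod k) (x : G → Fin k) : ZMod k :=
  Finsupp.linearCombination (ZMod k) (fun h => ((x h : ℕ) : ZMod k)) m

/-- The character of `[k]^G` attached to `m`. -/
def ch (m : G →₀ ZMod k) (x : G → Fin k) : Circle := ZMod.toCircle (pr m x)

lemma ch_add (m m' : G →₀ ZMod k) (x : G → Fin k) : ch (m + m') x = ch m x * ch m' x := by
  simp [ch, pr, AddChar.map_add_eq_mul]

lemma ch_zero (x : G → Fin k) : ch (0 : G →₀ ZMod k) x = 1 := by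
  simp [ch, pr]

lemma ch_neg (m : G →₀ ZMod k) (x : G → Fin k) : ch (-m) x = (ch m x)⁻¹ := by
  rw [eq_inv_iff_mul_eq_one, ← ch_add, neg_add_cancel, ch_zero]

lemma ch_sub (m m' : G →₀ ZMod k) (x : G → Fin k) : ch (m - m') x = ch m x * (ch m' x)⁻¹ := by
  rw [sub_eq_add_neg, ch_add, ch_neg]

lemma ch_tr (g : G) (m : G →₀ ZMod k) (x : G → Fin k) :
    ch (tr g m) x = ch m (bernoulliShift G (Fin k) g⁻¹ x) := by
  simp only [ch, pr, tr, Finsupp.linearCombination_mapDomain, bernoulliShift, inv_inv]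
  rfl

lemma continuous_ch (m : G →₀ ZMod k) : Continuous (ch m : (G → Fin k) → Circle) := by
  have h1 : Continuous (fun x : G → Fin k => pr m x) := by
    simp only [pr, Finsupp.linearCombination_apply, Finsupp.sum]
    refine continuous_finsetSum _ fun h _ => ?_
    exact (continuous_of_discreteTopology (f := fun i : Fin k => m h • ((i : ℕ) : ZMod k))).comp
      (continuous_apply h)
  exact (continuous_of_discreteTopology (f := fun a : ZMod k => ZMod.toCircle a)).comp h1

/-- The character as a continuous complex function. -/
def chC (m : G →₀ ZMod k) : C(G → Fin k, ℂ) :=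
  ⟨fun x => (ch m x : ℂ), continuous_coe_circle.comp (continuous_ch m)⟩

lemma cast_inj : Function.Injective (fun i : Fin k => ((i : ℕ) : ZMod k)) := by
  intro i j h
  have := (ZMod.natCast_eq_natCast_iff' _ _ _).1 h
  rw [Nat.mod_eq_of_lt i.2, Nat.mod_eq_of_lt j.2] at this
  exact Fin.ext this

lemma cast_bij : Function.Bijective (fun i : Fin k => ((i : ℕ) : ZMod k)) :=
  (Fintype.bijective_iff_injective_and_card _).2 ⟨cast_inj, by simp [ZMod.card]⟩

/-- The shift by one on `[k]`. -/
def sg (k : ℕ) [NeZero k] : Equiv.Perm (Fin k) :=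
  ((Equiv.ofBijective _ (cast_bij (k := k))).trans (Equiv.addRight 1)).trans
    (Equiv.ofBijective _ (cast_bij (k := k))).symm

lemma sg_cast (i : Fin k) : ((sg k i : ℕ) : ZMod k) = (i : ℕ) + 1 := by
  have := (Equiv.ofBijective _ (cast_bij (k := k))).apply_symm_apply (((i : ℕ) : ZMod k) + 1)
  exact this

lemma span_chC_dense :
    (Submodule.span ℂ (Set.range (chC : (G →₀ ZMod k) → C(G → Fin k, ℂ)))).topologicalClosure
      = ⊤ := by
  let A : StarSubalgebra ℂ C(G → Fin k, ℂ) :=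
    { toSubalgebra := Algebra.adjoin ℂ (Set.range chC)
      star_mem' := by
        change Algebra.adjoin ℂ (Set.range (chC (G := G) (k := k))) ≤
          star (Algebra.adjoin ℂ (Set.range chC))
        refine Algebra.adjoin_le ?_
        rintro - ⟨n, rfl⟩
        refine Algebra.subset_adjoin ⟨-n, ContinuousMap.ext fun x => ?_⟩
        simp [chC, ch_neg, conj_circle] }
  have hA : Subalgebra.toSubmodule A.toSubalgebra = Submodule.span ℂ (Set.range chC) := by
    apply Algebra.adjoin_eq_span_of_subset
    refine Set.Subset.trans ?_ Submodule.subset_span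
    intro x hx
    refine Submonoid.closure_induction (fun _ => id) ⟨0, ?_⟩ ?_ hx
    · ext1 z; simp [chC, ch_zero]
    · rintro - - - - ⟨m, rfl⟩ ⟨n, rfl⟩
      refine ⟨m + n, ?_⟩
      ext1 z
      simp [chC, ch_add]
  have hsep : A.SeparatesPoints := by
    intro x y hxy
    obtain ⟨h, hh⟩ := Function.ne_iff.1 hxy
    refine ⟨_, ⟨chC (Finsupp.single h 1), Algebra.subset_adjoin ⟨_, rfl⟩, rfl⟩, ?_⟩
    intro heq
    apply hh
    have h1 : ch (Finsupp.single h (1 : ZMod k)) x = ch (Finsupp.single h (1 : ZMod k)) y :=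
      Circle.ext heq
    have h2 := ZMod.injective_toCircle h1
    simp only [pr, Finsupp.linearCombination_single, one_smul] at h2
    exact cast_inj h2
  rw [← hA]
  exact congr_arg (Subalgebra.toSubmodule <| StarSubalgebra.toSubalgebra ·)
    (ContinuousMap.starSubalgebra_topologicalClosure_eq_top_of_separatesPoints A hsep)

lemma bernoulli_eq {ν : Measure (Fin k)} [IsProbabilityMeasure ν] {μ : Measure (G → Fin k)}
    (hμ : IsBernoulliMeasure ν μ) : μ = Measure.infinitePi (fun _ => ν) := by
  refine Measure.eq_infinitePi _ fun s t ht => ?_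
  rw [← hμ s t ht]
  rfl

lemma bernoulli_shift {ν : Measure (Fin k)} [IsProbabilityMeasure ν] {μ : Measure (G → Fin k)}
    (hμ : IsBernoulliMeasure ν μ) (g : G) :
    MeasurePreserving (bernoulliShift G (Fin k) g) μ μ := by
  have hm : Measurable (bernoulliShift G (Fin k) g) :=
    measurable_pi_lambda _ fun h => measurable_pi_apply _
  refine ⟨hm, ?_⟩
  conv_rhs => rw [bernoulli_eq hμ]
  refine Measure.eq_infinitePi _ fun s t ht => ?_
  rw [Measure.map_apply hm (.pi s.countable_toSet fun i _ => ht i)]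
  have := hμ (s.map (Equiv.mulLeft g⁻¹).toEmbedding) (fun i => t (g * i)) (fun i => ht _)
  rw [Finset.prod_map] at this
  simp only [Equiv.coe_toEmbedding, Equiv.coe_mulLeft, mul_inv_cancel_left] at this
  rw [← this]
  congr 1
  ext x
  simp only [Set.mem_preimage, Set.mem_pi, Finset.mem_coe, bernoulliShift, Set.mem_ofPred_eq,
    Finset.mem_map_equiv]
  constructor
  · intro H i hi
    have := H (g * i) (by simpa using hi)
    simpa using this
  · intro H i hi
    have := H (g⁻¹ * i) (by simpa using hi)
    simpa using this

lemma map_uniform {ν : Measure (Fin k)} (hunif : ∀ i : Fin k, ν {i} = (k : ENNReal)⁻¹)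
    (σ : Equiv.Perm (Fin k)) : ν.map σ = ν := by
  refine Measure.ext_of_singleton fun i => ?_
  rw [Measure.map_apply (measurable_of_finite _) (measurableSet_singleton _)]
  have : (σ ⁻¹' {i}) = {σ.symm i} := by
    ext j; simp [Equiv.eq_symm_apply]
  rw [this, hunif, hunif]

lemma integral_ch [Countable G] {ν : Measure (Fin k)} [IsProbabilityMeasure ν]
    (hunif : ∀ i : Fin k, ν {i} = (k : ENNReal)⁻¹) {μ : Measure (G → Fin k)}
    (hμ : IsBernoulliMeasure ν μ) (m : G →₀ ZMod k) (hm : m ≠ 0) :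
    ∫ x, (ch m x : ℂ) ∂μ = 0 := by
  classical
  obtain ⟨h, hh⟩ := Finsupp.ne_iff.1 hm
  let f : G → Fin k → Fin k := fun i => if i = h then sg k else id
  have hf : ∀ i, Measurable (f i) := fun i => measurable_of_finite _
  have hT : μ.map (fun x i => f i (x i)) = μ := by
    conv_lhs => rw [bernoulli_eq hμ]
    rw [Measure.infinitePi_map_pi _ hf, bernoulli_eq hμ]
    congr 1
    ext1 i
    by_cases hi : i = h
    · simp only [f, hi, if_true]; exact map_uniform hunif _
    · simp only [f, hi, if_false]; exact Measure.map_id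
  have hch : ∀ x : G → Fin k, ch m (fun i => f i (x i)) = ch m x * ZMod.toCircle (m h) := by
    intro x
    rw [ch, ch, ← AddChar.map_add_eq_mul]
    congr 1
    simp only [pr, Finsupp.linearCombination_apply, Finsupp.sum]
    have : m h = ∑ i ∈ m.support, m i • (if i = h then (1 : ZMod k) else 0) := by
      simp
    conv_rhs => rw [this]
    rw [← Finset.sum_add_distrib]
    refine Finset.sum_congr rfl fun i _ => ?_
    rw [← smul_add]
    congr 1
    by_cases hi : i = h
    · simp [f, hi, sg_cast]
    · simp [f, hi]
  have h1 : ∫ x, (ch m x : ℂ) ∂μ = (∫ x, (ch m x : ℂ) ∂μ) * (ZMod.toCircle (m h) : ℂ) := by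
    conv_lhs => rw [← hT]
    have hTm : Measurable (fun (x : G → Fin k) i => f i (x i)) :=
      measurable_pi_lambda _ fun i => (hf i).comp (measurable_pi_apply i)
    rw [integral_map hTm.aemeasurable
      (by rw [hT]; exact (chC m).continuous.aestronglyMeasurable)]
    simp only [hch, Circle.coe_mul]
    rw [integral_mul_const]
  have h2 : (ZMod.toCircle (m h) : ℂ) ≠ 1 := by
    intro h3
    apply hh
    have : ZMod.toCircle (m h) = ZMod.toCircle (0 : ZMod k) := by
      apply Circle.ext; simpa using h3
    simpa using ZMod.injective_toCircle this
  by_contra hne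
  apply h2
  exact (mul_eq_left₀ hne).1 h1.symm

end Aux

/-- Let `G` be countable infinite and `k ≥ 2`.  If the Bernoulli
shift `G ↷ ([k]^G, ν_k^G)` (with `ν_k` the uniform probability measure on the
`k`-point set `[k] = Fin k`) is `𝕋`-cocycle superrigid, then `H¹(G, ℤG/kℤG) = 0`,
where `ℤG/kℤG` is realized as the group algebra of `G` over `ℤ/kℤ` with the left
regular `G`-action. -/
theorem h1_zg_mod_k_trivial_of_bernoulli_superrigid
    (G : Type) [Group G] [Countable G] [Infinite G]
    (k : ℕ) (hk : 2 ≤ k)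
    (ν : Measure (Fin k)) [IsProbabilityMeasure ν] (hunif : ∀ i : Fin k, ν {i} = (k : ENNReal)⁻¹)
    (μ : Measure (G → Fin k)) [IsProbabilityMeasure μ] (hμ : IsBernoulliMeasure ν μ)
    (hsr : IsCocycleSuperrigid (bernoulliShift G (Fin k)) μ) :
    ∀ x : groupCohomology.H1 (Rep.ofMulAction (ZMod k) G G), x = 0 := by
  have : NeZero k := ⟨by omega⟩
  classical
  intro x
  induction x using groupCohomology.H1_induction_on with | h c₀ => ?_
  rw [groupCohomology.H1π_eq_zero_iff]
  set c : G → G →₀ ZMod k := fun g => (c₀ g).coeff with hc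
  have htr : ∀ (g : G) (y : MonoidAlgebra (ZMod k) G),
      (Representation.ofMulAction (ZMod k) G G g y).coeff = tr g y.coeff := by
    intro g y
    ext h
    rw [Representation.coeff_ofMulAction]
    have := tr_apply_mul g (g⁻¹ * h) y.coeff
    rw [mul_inv_cancel_left] at this
    rw [this]
    rfl
  have hcoc : ∀ g h, c (g * h) = tr g (c h) + c g := by
    intro g h
    have := (groupCohomology.mem_cocycles₁_iff (c₀ : G → _)).1 c₀.2 g h
    simp only [hc]
    rw [this, MonoidAlgebra.coeff_add]
    rw [htr]
  suffices H : ∃ m, ∀ g, tr g m - m = c g by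
    obtain ⟨m, hm⟩ := H
    refine ⟨MonoidAlgebra.ofCoeff m, ?_⟩
    funext g
    apply MonoidAlgebra.coeff_injective
    have h1 := hm g
    simp only [hc] at h1
    rw [← h1]
    change (Representation.ofMulAction (ZMod k) G G g (MonoidAlgebra.ofCoeff m)
      - MonoidAlgebra.ofCoeff m).coeff = _
    rw [MonoidAlgebra.coeff_sub, htr]
  obtain ⟨lam, b, hb, hlam⟩ := hsr (fun g x => ch (c g) x)
    ⟨fun g => (continuous_ch (c g)).measurable, fun g h => ae_of_all _ fun x => by
      simp only
      rw [hcoc, ch_add, ch_tr, mul_comm]⟩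
  have hbm : Measurable (fun x => (b x : ℂ)) := continuous_coe_circle.measurable.comp hb
  have hbL : MemLp (fun x => (b x : ℂ)) 2 μ :=
    MemLp.of_bound hbm.aestronglyMeasurable 1 (ae_of_all _ fun x => (norm_circle (b x)).le)
  set B : Lp ℂ 2 μ := hbL.toLp with hB
  set e : (G →₀ ZMod k) → Lp ℂ 2 μ := fun m => ContinuousMap.toLp 2 μ ℂ (chC m) with he
  have hortho : Orthonormal ℂ e := by
    rw [orthonormal_iff_ite]
    intro i j
    rw [he, ContinuousMap.inner_toLp]
    have h1 : ∀ x, (chC j) x * (starRingEnd ℂ) ((chC i) x) = (ch (j - i) x : ℂ) := by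
      intro x
      simp [chC, ch_sub, conj_circle]
    simp_rw [h1]
    split_ifs with hij
    · simp [hij, ch_zero]
    · exact integral_ch hunif hμ _ (sub_ne_zero.2 (Ne.symm hij))
  have hdense : (Submodule.span ℂ (Set.range e)).topologicalClosure = ⊤ := by
    have := (ContinuousMap.toLp_denseRange ℂ μ ℂ
      (p := 2) (by simp)).topologicalClosure_map_submodule (span_chC_dense (G := G) (k := k))
    rw [← this, Submodule.map_span, ← Set.range_comp]
    rfl
  have hinner : ∀ m, inner ℂ (e m) B = ∫ x, (b x : ℂ) * ((ch m x)⁻¹ : Circle) ∂μ := by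
    intro m
    rw [L2.inner_def]
    apply integral_congr_ae
    filter_upwards [(chC m).coeFn_toLp (p := 2) (𝕜 := ℂ) μ, hbL.coeFn_toLp] with x h1 h2
    rw [he, hB, h1, h2]
    simp [chC, conj_circle]
  have hex : ∃ m₀, ‖(inner ℂ (e m₀) B : ℂ)‖ ≠ 0 := by
    by_contra! hcon
    have hB0 : B = 0 := by
      have h1 : B ∈ (Submodule.span ℂ (Set.range e))ᗮ := by
        rw [Submodule.mem_orthogonal]
        intro u hu
        induction hu using Submodule.span_induction with
        | mem x hx => obtain ⟨m, rfl⟩ := hx; exact norm_eq_zero.1 (hcon m)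
        | zero => simp
        | add x y _ _ hx hy => rw [inner_add_left, hx, hy, add_zero]
        | smul a x _ hx => rw [inner_smul_left, hx, mul_zero]
      rw [← Submodule.orthogonal_closure, hdense] at h1
      simpa using h1
    have h2 := hbL.coeFn_toLp
    rw [← hB, hB0] at h2
    have h3 : ∀ᵐ x ∂μ, False := by
      filter_upwards [h2, Lp.coeFn_zero ℂ 2 μ] with x h4 h5
      rw [h5] at h4
      exact (Circle.coe_ne_zero (b x)) h4.symm
    simp at h3
    exact IsProbabilityMeasure.ne_zero μ h3
  obtain ⟨m₀, hm₀⟩ := hex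
  refine exists_fixed c (fun m => ‖(inner ℂ (e m) B : ℂ)‖)
    (hortho.inner_products_summable B) m₀ hm₀ fun g m => ?_
  have hI : (inner ℂ (e m) B : ℂ) = (lam g : ℂ)⁻¹ * inner ℂ (e (tr g m - c g)) B := by
    have hF : Measurable (fun x => (b x : ℂ) * ((ch m x)⁻¹ : Circle)) :=
      hbm.mul (continuous_coe_circle.measurable.comp (continuous_ch m).measurable.inv)
    have hs := bernoulli_shift hμ g⁻¹
    rw [hinner, hinner, ← integral_const_mul]
    conv_lhs => rw [← hs.map_eq]
    rw [integral_map hs.measurable.aemeasurable hF.aestronglyMeasurable]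
    apply integral_congr_ae
    filter_upwards [hlam g] with x hx
    rw [← ch_tr, ← Circle.coe_mul, ← Circle.coe_inv, ← Circle.coe_mul, ← Circle.coe_mul]
    congr 1
    rw [ch_sub, hx]
    simp only [mul_inv, inv_inv]
    rw [show (lam g)⁻¹ * (b x * ((ch (tr g m) x)⁻¹ *
      (lam g * (b (bernoulliShift G (Fin k) g⁻¹ x) * (b x)⁻¹)))) =
      ((lam g)⁻¹ * lam g) * (b x * (b x)⁻¹) *
      (b (bernoulliShift G (Fin k) g⁻¹ x) * (ch (tr g m) x)⁻¹) by
        ac_rfl]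
    rw [inv_mul_cancel, mul_inv_cancel, one_mul, one_mul]
  simp only [hI, norm_mul, norm_inv, norm_circle, inv_one, one_mul]

end AlgActCohomology
end
end
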